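/- For real numbers λ ≥ 0 and σ ≤ 0, define g(λ,σ) as follows: if σ² − 4λ > 0, g(λ,σ) = (sinh(a)/a)·e^σ with a = √(σ² − 4λ); if σ² − 4λ < 0, g(λ,σ) = (sin(a)/a)·e^σ with a = √(4λ − σ²); and if σ² = 4λ, g(λ,σ) = e^σ. Then |g(λ,σ)| ≤ 1 for all λ ≥ 0 and σ ≤ 0. -/

import Mathlib

/-- The function `g(λ,σ)` of the paper: `(sinh a / a)·e^σ` with `a = √(σ² − 4λ)` when
`σ² − 4λ > 0`, `(sin a / a)·e^σ` with `a = √(4λ − σ²)` when `σ² − 4λ < 0`, and `e^σ`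
when `σ² = 4λ`. -/
noncomputable def gFun (lam sig : ℝ) : ℝ :=
  if 0 < sig ^ 2 - 4 * lam then
    Real.sinh (Real.sqrt (sig ^ 2 - 4 * lam)) / Real.sqrt (sig ^ 2 - 4 * lam) * Real.exp sig
  else if sig ^ 2 - 4 * lam < 0 then
    Real.sin (Real.sqrt (4 * lam - sig ^ 2)) / Real.sqrt (4 * lam - sig ^ 2) * Real.exp sig
  else Real.exp sig

/-- `|g(λ,σ)| ≤ 1` for all `λ ≥ 0` and `σ ≤ 0`. -/
theorem abs_gFun_le_one (lam sig : ℝ) (hlam : 0 ≤ lam) (hsig : sig ≤ 0) :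
    |gFun lam sig| ≤ 1 := by
  have hexp : Real.exp sig ≤ 1 := Real.exp_le_one_iff.mpr hsig
  have hpos := Real.exp_pos sig
  unfold gFun
  split_ifs with h1 h2
  · have ha : 0 < Real.sqrt (sig ^ 2 - 4 * lam) := Real.sqrt_pos.mpr h1
    have hle : Real.sqrt (sig ^ 2 - 4 * lam) ≤ -sig := by
      apply Real.sqrt_le_iff.mpr
      constructor <;> nlinarith
    generalize Real.sqrt (sig ^ 2 - 4 * lam) = a at ha hle
    have hs : 0 ≤ Real.sinh a := Real.sinh_nonneg_iff.mpr ha.le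
    rw [abs_of_nonneg (by positivity), div_mul_eq_mul_div, div_le_one ha]
    have h3 : Real.exp sig ≤ Real.exp (-a) := Real.exp_le_exp.mpr (by linarith)
    have h4 : Real.sinh a * Real.exp (-a) ≤ a := by
      have e1 : Real.exp a * Real.exp (-a) = 1 := by rw [← Real.exp_add]; simp
      have e2 : Real.exp (-a) * Real.exp (-a) = Real.exp (-(2 * a)) := by
        rw [← Real.exp_add]; ring_nf
      have e3 := Real.add_one_le_exp (-(2 * a))
      rw [Real.sinh_eq]
      nlinarith
    exact (mul_le_mul_of_nonneg_left h3 hs).trans h4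
  · have ha : 0 < Real.sqrt (4 * lam - sig ^ 2) := Real.sqrt_pos.mpr (by linarith)
    generalize Real.sqrt (4 * lam - sig ^ 2) = a at ha
    have hs : |Real.sin a| ≤ a := by
      have := Real.abs_sin_sub_sin_le a 0
      simpa [abs_of_pos ha] using this
    rw [abs_mul, abs_div, abs_of_pos ha, abs_of_pos hpos]
    exact mul_le_one₀ ((div_le_one ha).mpr hs) hpos.le hexp
  · rw [abs_of_pos hpos]; exact hexp
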